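/- Let G be a weighted graph with terminal set K such that for every U ⊆ K the minimum terminal cut is unique, i.e. there is exactly one A_U ⊆ V with A_U ∩ K = U and h_G(A_U) = h_K^G(U). Let H' be any contraction-based mimicking network of (G,K) given by a surjection f' : V → V_{H'}. Then for every edge (y,z) of G with positive capacity that crosses some minimum terminal cut (i.e. y ∈ A_U and z ∉ A_U for some U ⊆ K), one has f'(y) ≠ f'(z). -/

import Mathlib

open scoped Classical

/-- A weighted graph with a distinguished embedded set of terminals indexed by `κ`:
a finite vertex type `V`, an embedding `ι : κ ↪ V` of the terminals, and a symmetric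
nonnegative capacity function `c` on pairs of vertices. -/
structure WeightedGraph (κ : Type) where
  V : Type
  [fintypeV : Fintype V]
  ι : κ ↪ V
  c : V → V → ℝ
  symm : ∀ u v, c u v = c v u
  nonneg : ∀ u v, 0 ≤ c u v

namespace WeightedGraph

variable {κ : Type}

instance (G : WeightedGraph κ) : Fintype G.V := G.fintypeV

/-- The cut function `h_G(A) = Σ_{u ∈ A, v ∉ A} c(u,v)`. -/
noncomputable def cutval (G : WeightedGraph κ) (A : Finset G.V) : ℝ :=
  ∑ u ∈ A, ∑ v ∈ Aᶜ, G.c u v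

/-- The vertex sets realizing the terminal partition `(U, K \ U)`. -/
noncomputable def cutSets (G : WeightedGraph κ) (U : Finset κ) : Finset (Finset G.V) :=
  Finset.univ.filter fun A => ∀ x : κ, G.ι x ∈ A ↔ x ∈ U

theorem cutSets_nonempty (G : WeightedGraph κ) (U : Finset κ) : (G.cutSets U).Nonempty := by
  refine ⟨U.image G.ι, ?_⟩
  simp [cutSets, Finset.mem_image, G.ι.injective.eq_iff]

/-- The terminal cut function `h_K^G(U) = min { h_G(A) : A ∩ K = U }`. -/
noncomputable def termCut (G : WeightedGraph κ) (U : Finset κ) : ℝ :=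
  (G.cutSets U).inf' (G.cutSets_nonempty U) G.cutval

/-- `H` is a mimicking network for `(G, K)`: all minimum terminal cut values agree. -/
def IsMimicking (G H : WeightedGraph κ) : Prop :=
  ∀ U : Finset κ, H.termCut U = G.termCut U

/-- `H` is a quotient (contraction) of `G` along the surjection `f`: terminals map to
terminals, and capacities between distinct classes are sums of the original capacities. -/
def IsQuotient (G H : WeightedGraph κ) (f : G.V → H.V) : Prop :=
  Function.Surjective f ∧ (∀ x : κ, f (G.ι x) = H.ι x) ∧
    ∀ y z : H.V, y ≠ z →
      H.c y z = ∑ u ∈ Finset.univ.filter (fun u => f u = y),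
        ∑ v ∈ Finset.univ.filter (fun v => f v = z), G.c u v

end WeightedGraph

/-!
Contracting preserves the value of every cut that is a union of fibres. Hence, if the quotient
mimics `G`, the preimage of a minimum terminal cut of the quotient is a minimum terminal cut of `G`.
By uniqueness it is the given one, which is therefore a union of fibres, and no fibre contains
points on both sides of it.
-/

namespace WeightedGraph

variable {κ : Type} {G H : WeightedGraph κ} {f : G.V → H.V} {U : Finset κ}

/-- `A` is a minimum terminal cut for `U`, i.e. `A ∩ K = U` and `h_G(A) = h_K^G(U)`; the first
condition is phrased through the embedding `ι` of the terminals. -/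
def IsMinTermCut (G : WeightedGraph κ) (U : Finset κ) (A : Finset G.V) : Prop :=
  (∀ x : κ, G.ι x ∈ A ↔ x ∈ U) ∧ G.cutval A = G.termCut U

theorem mem_cutSets {A : Finset G.V} : A ∈ G.cutSets U ↔ ∀ x : κ, G.ι x ∈ A ↔ x ∈ U :=
  Finset.mem_filter_univ A

theorem exists_isMinTermCut (G : WeightedGraph κ) (U : Finset κ) :
    ∃ A : Finset G.V, G.IsMinTermCut U A := by
  obtain ⟨A, hA, hmin⟩ := Finset.exists_mem_eq_inf' (G.cutSets_nonempty U) G.cutval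
  exact ⟨A, mem_cutSets.mp hA, hmin.symm⟩

theorem IsQuotient.cutval_preimage (hq : IsQuotient G H f) (B : Finset H.V) :
    G.cutval {u | f u ∈ B} = H.cutval B := by
  obtain ⟨-, -, hcap⟩ := hq
  have hcompl : ({u | f u ∈ B} : Finset G.V)ᶜ = ({v | f v ∈ Bᶜ} : Finset G.V) := by
    simp only [Finset.compl_filter, Finset.mem_compl]
  calc G.cutval {u | f u ∈ B}
      = ∑ u with f u ∈ B, ∑ v with f v ∈ Bᶜ, G.c u v := by rw [cutval, hcompl]
    _ = ∑ b ∈ B, ∑ u with f u = b, ∑ b' ∈ Bᶜ, ∑ v with f v = b', G.c u v := by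
      simp only [← Finset.sum_fiberwise_eq_sum_filter]
    _ = ∑ b ∈ B, ∑ b' ∈ Bᶜ, ∑ u with f u = b, ∑ v with f v = b', G.c u v :=
      Finset.sum_congr rfl fun _ _ => Finset.sum_comm
    _ = H.cutval B :=
      Finset.sum_congr rfl fun b hb => Finset.sum_congr rfl fun b' hb' =>
        (hcap b b' (ne_of_mem_of_not_mem hb (Finset.mem_compl.mp hb'))).symm

theorem IsQuotient.isMinTermCut_preimage (hq : IsQuotient G H f)
    (hterm : H.termCut U = G.termCut U) {B : Finset H.V} (hB : H.IsMinTermCut U B) :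
    G.IsMinTermCut U {u | f u ∈ B} := by
  refine ⟨fun x => ?_, ?_⟩
  · rw [Finset.mem_filter_univ, hq.2.1 x, hB.1 x]
  · rw [hq.cutval_preimage, hB.2, hterm]

end WeightedGraph

theorem crossing_edge_not_contracted_general {κ : Type} {G H : WeightedGraph κ} {f : G.V → H.V}
    (hq : WeightedGraph.IsQuotient G H f) {U : Finset κ} (hterm : H.termCut U = G.termCut U)
    (huniq : ∃! A : Finset G.V, G.IsMinTermCut U A) {A : Finset G.V} (hA : G.IsMinTermCut U A)
    {y z : G.V} (hy : y ∈ A) (hz : z ∉ A) :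
    f y ≠ f z := by
  obtain ⟨B, hB⟩ := H.exists_isMinTermCut U
  obtain rfl : A = ({u | f u ∈ B} : Finset G.V) :=
    huniq.unique hA (hq.isMinTermCut_preimage hterm hB)
  rw [Finset.mem_filter_univ] at hy hz
  exact ne_of_mem_of_not_mem hy hz

/-- if `G` has unique minimum terminal cuts and `H'` is any
contraction-based mimicking network of `(G,K)` given by `f'`, then the endpoints of any
positive-capacity edge crossing some minimum terminal cut are not identified by `f'`. -/
theorem crossing_edge_not_contracted {κ : Type} (G : WeightedGraph κ)
    (huniq : ∀ U : Finset κ, ∃! A : Finset G.V,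
      (∀ x : κ, G.ι x ∈ A ↔ x ∈ U) ∧ G.cutval A = G.termCut U)
    (H' : WeightedGraph κ) (f' : G.V → H'.V)
    (hq' : WeightedGraph.IsQuotient G H' f')
    (hm' : WeightedGraph.IsMimicking G H')
    (y z : G.V) (hc : 0 < G.c y z)
    (hcross : ∃ (U : Finset κ) (A : Finset G.V),
      (∀ x : κ, G.ι x ∈ A ↔ x ∈ U) ∧ G.cutval A = G.termCut U ∧ y ∈ A ∧ z ∉ A) :
    f' y ≠ f' z := by
  obtain ⟨U, A, hA, hmin, hy, hz⟩ := hcross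
  exact crossing_edge_not_contracted_general hq' (hm' U) (huniq U) ⟨hA, hmin⟩ hy hz
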